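/- The quotient of G₂₉ by its subgroup of scalar matrices (equivalently, the image PG₂₉ of G₂₉ in PGL(4,ℂ)) and the quotient of G_BH by its subgroup of scalar matrices (equivalently, the image PG_BH of G_BH in PGL(6,ℂ)) are both finite groups of order 1920, but they are not isomorphic as groups. -/

import Mathlib

open Matrix Complex

/-- The generator `s₁ = diag(1,1,1,-1)` of Mukai's group `G₂₉`. -/
def s1 : Matrix (Fin 4) (Fin 4) ℂ := !![1,0,0,0; 0,1,0,0; 0,0,1,0; 0,0,0,-1]

/-- The generator `s₂ = (1/2)·[[1,1,i,i],[1,1,-i,-i],[-i,i,1,-1],[-i,i,-1,1]]` of `G₂₉`. -/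
noncomputable def s2 : Matrix (Fin 4) (Fin 4) ℂ :=
  (1/2 : ℂ) • !![1, 1, I, I; 1, 1, -I, -I; -I, I, 1, -1; -I, I, -1, 1]

/-- The generator `s₃` (the transposition of the first two coordinates) of `G₂₉`. -/
def s3 : Matrix (Fin 4) (Fin 4) ℂ := !![0,1,0,0; 1,0,0,0; 0,0,1,0; 0,0,0,1]

/-- The generator `s₄` (the transposition of the middle two coordinates) of `G₂₉`. -/
def s4 : Matrix (Fin 4) (Fin 4) ℂ := !![1,0,0,0; 0,0,1,0; 0,1,0,0; 0,0,0,1]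

/-- Mukai's group `G₂₉`: the subgroup of `GL(4,ℂ)` generated by `s₁, s₂, s₃, s₄`. -/
def G29 : Subgroup (GL (Fin 4) ℂ) :=
  Subgroup.closure
    {g | (↑g : Matrix (Fin 4) (Fin 4) ℂ) ∈ ({s1, s2, s3, s4} : Set (Matrix (Fin 4) (Fin 4) ℂ))}

/-- The generator `t = diag(-1,1,1,1,1,1)` of the Brandhorst–Hashimoto group. -/
def tBH : Matrix (Fin 6) (Fin 6) ℂ :=
  !![-1,0,0,0,0,0; 0,1,0,0,0,0; 0,0,1,0,0,0; 0,0,0,1,0,0; 0,0,0,0,1,0; 0,0,0,0,0,1]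

/-- The generator `u` of the Brandhorst–Hashimoto group. -/
noncomputable def uBH : Matrix (Fin 6) (Fin 6) ℂ :=
  !![I,0,0,0,0,0; 0,0,1,0,0,0; 0,1,0,0,0,0; 0,0,0,-I,0,0; 0,0,0,0,0,1; 0,0,0,0,1,0]

/-- The generator `v` (a permutation matrix) of the Brandhorst–Hashimoto group. -/
def vBH : Matrix (Fin 6) (Fin 6) ℂ :=
  !![0,0,0,0,0,1; 1,0,0,0,0,0; 0,1,0,0,0,0; 0,0,1,0,0,0; 0,0,0,0,1,0; 0,0,0,1,0,0]

/-- The Brandhorst–Hashimoto group `G_BH`: the subgroup of `GL(6,ℂ)` generated by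
`t`, `u` and `v`. -/
noncomputable def GBH : Subgroup (GL (Fin 6) ℂ) :=
  Subgroup.closure
    {g | (↑g : Matrix (Fin 6) (Fin 6) ℂ) ∈ ({tBH, uBH, vBH} : Set (Matrix (Fin 6) (Fin 6) ℂ))}

/-- The scalar matrices of `GL(n,ℂ)` form its center; `PG₂₉` is the image of `G₂₉` in
`PGL(4,ℂ) = GL(4,ℂ)/center`, i.e. the quotient of `G₂₉` by its scalar matrices. -/
def PG29 : Subgroup ((GL (Fin 4) ℂ) ⧸ Subgroup.center (GL (Fin 4) ℂ)) :=
  G29.map (QuotientGroup.mk' (Subgroup.center (GL (Fin 4) ℂ)))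

/-- `PG_BH` is the image of `G_BH` in `PGL(6,ℂ) = GL(6,ℂ)/center`, i.e. the quotient
of `G_BH` by its subgroup of scalar matrices. -/
noncomputable def PGBH : Subgroup ((GL (Fin 6) ℂ) ⧸ Subgroup.center (GL (Fin 6) ℂ)) :=
  GBH.map (QuotientGroup.mk' (Subgroup.center (GL (Fin 6) ℂ)))


/-! ### A general counting lemma -/

/-- If `Γ ≤ G × Q` is such that the elements with central first component have trivial second
component, the image of `Γ` in `G ⧸ Z` has order `|Q-part| * |kernel part|`. -/
theorem card_image_of_relation {G Q ι : Type*} [Group G] [Group Q] (Z : Subgroup G) [Z.Normal]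
    (Γ : Subgroup (G × Q)) (hZ : ∀ g q, (g, q) ∈ Γ → g ∈ Z → q = 1)
    (w : ι → G ⧸ Z) (hinj : Function.Injective w)
    (hw : ∀ i, ∃ g, (g, (1 : Q)) ∈ Γ ∧ (QuotientGroup.mk' Z g) = w i)
    (hK : ∀ g, (g, (1 : Q)) ∈ Γ → ∃ i, (QuotientGroup.mk' Z g) = w i) :
    Nat.card ((Γ.map (MonoidHom.fst G Q)).map (QuotientGroup.mk' Z)) =
      Nat.card (Γ.map (MonoidHom.snd G Q)) * Nat.card ι := by
  let f : Γ →* G ⧸ Z := ((QuotientGroup.mk' Z).comp (MonoidHom.fst G Q)).comp Γ.subtype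
  let p : Γ →* Q := (MonoidHom.snd G Q).comp Γ.subtype
  have hf : f.range = (Γ.map (MonoidHom.fst G Q)).map (QuotientGroup.mk' Z) := by
    rw [MonoidHom.range_eq_map, ← Subgroup.map_map, ← MonoidHom.range_eq_map,
      Subgroup.range_subtype, ← Subgroup.map_map]
  have hp : p.range = Γ.map (MonoidHom.snd G Q) := by
    rw [MonoidHom.range_eq_map, ← Subgroup.map_map, ← MonoidHom.range_eq_map,
      Subgroup.range_subtype]
  have hle : f.ker ≤ p.ker := by
    rintro ⟨⟨g, q⟩, h⟩ hk
    have h1 : QuotientGroup.mk' Z g = 1 := hk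
    have h2 : g ∈ Z := by simpa using h1
    exact hZ g q h h2
  have hmapset : Nat.card (p.ker.map f) = Nat.card ι := by
    have : ((p.ker.map f : Subgroup (G ⧸ Z)) : Set (G ⧸ Z)) = Set.range w := by
      ext x
      constructor
      · rintro ⟨⟨⟨g, q⟩, h⟩, hk, rfl⟩
        have hq : q = 1 := hk
        subst hq
        obtain ⟨i, hi⟩ := hK g h
        exact ⟨i, hi.symm⟩
      · rintro ⟨i, rfl⟩
        obtain ⟨g, hg, hgi⟩ := hw i
        exact ⟨⟨(g, 1), hg⟩, rfl, hgi⟩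
    calc Nat.card (p.ker.map f) = Nat.card (Set.range w) := by
          rw [← this]; rfl
      _ = Nat.card ι := (Nat.card_congr (Equiv.ofInjective w hinj)).symm
  rw [← hf, ← hp, ← Subgroup.index_ker f, ← Subgroup.index_ker p, ← hmapset]
  have h3 : Nat.card (p.ker.map f) = f.ker.relIndex p.ker := by
    rw [Subgroup.relIndex_ker]
  rw [h3, mul_comm, Subgroup.relIndex_mul_index hle]

/-- A finite list containing `1`, closed under left multiplication by involutive-or-finite-order
generators, exhausts the generated subgroup. -/
theorem closure_eq_list {Q : Type*} [Group Q] [Finite Q] (S : Set Q) (L : List Q)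
    (h1 : (1 : Q) ∈ L) (hmul : ∀ s ∈ S, ∀ x ∈ L, s * x ∈ L)
    (hL : ∀ x ∈ L, x ∈ Subgroup.closure S) (x : Q) :
    x ∈ Subgroup.closure S ↔ x ∈ L := by
  refine ⟨fun hx => ?_, hL x⟩
  rw [← Subgroup.mem_toSubmonoid, Subgroup.closure_toSubmonoid_of_finite] at hx
  induction hx using Submonoid.closure_induction_left with
  | one => exact h1
  | mul_left s hs y _ ih => exact hmul s hs y ih

/-! ### Gaussian integer matrices -/

/-- The entrywise map from Gaussian integer matrices to complex matrices. -/
noncomputable def toC {n : ℕ} :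
    Matrix (Fin n) (Fin n) GaussianInt →+* Matrix (Fin n) (Fin n) ℂ :=
  GaussianInt.toComplex.mapMatrix

theorem toC_apply {n : ℕ} (A : Matrix (Fin n) (Fin n) GaussianInt) (i j : Fin n) :
    toC A i j = GaussianInt.toComplex (A i j) := rfl

theorem mem_center_iff_smul {n : ℕ} (g : GL (Fin n) ℂ) :
    g ∈ Subgroup.center (GL (Fin n) ℂ) ↔
      ∃ c : ℂ, (g : Matrix (Fin n) (Fin n) ℂ) = c • (1 : Matrix (Fin n) (Fin n) ℂ) := by
  rw [Matrix.GeneralLinearGroup.mem_center_iff_val_mem_range_scalar]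
  constructor
  · rintro ⟨c, hc⟩
    exact ⟨c, by rw [← hc, Matrix.smul_one_eq_diagonal]; rfl⟩
  · rintro ⟨c, hc⟩
    exact ⟨c, by rw [hc, Matrix.smul_one_eq_diagonal]; rfl⟩

/-- Equality in `PGL` is proportionality. -/
theorem mk_eq_mk_iff_smul {n : ℕ} (g h : GL (Fin n) ℂ) :
    QuotientGroup.mk' (Subgroup.center (GL (Fin n) ℂ)) g =
      QuotientGroup.mk' (Subgroup.center (GL (Fin n) ℂ)) h ↔
      ∃ c : ℂ, (g : Matrix (Fin n) (Fin n) ℂ) = c • (h : Matrix (Fin n) (Fin n) ℂ) := by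
  rw [eq_comm, QuotientGroup.mk'_apply, QuotientGroup.mk'_apply, QuotientGroup.eq,
    mem_center_iff_smul]
  constructor
  · rintro ⟨c, hc⟩
    refine ⟨c, ?_⟩
    have : (g : Matrix (Fin n) (Fin n) ℂ) = (h : Matrix (Fin n) (Fin n) ℂ) * (h⁻¹ * g : GL (Fin n) ℂ) := by
      rw [← Units.val_mul]; simp
    rw [this, hc]; simp
  · rintro ⟨c, hc⟩
    refine ⟨c, ?_⟩
    rw [Units.val_mul, hc, mul_smul_comm, ← Units.val_mul]; simp

/-! ### The group `G₂₉` -/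

/-- The imaginary unit in `ℤ[i]`. -/
def gi : GaussianInt := ⟨0, 1⟩

theorem toComplex_gi : GaussianInt.toComplex gi = I := by
  simp [gi, GaussianInt.toComplex_def']

/-- Identity and Pauli matrices in dimension two. -/
def pauliTwo : Fin 4 → Matrix (Fin 2) (Fin 2) GaussianInt :=
  ![!![1, 0; 0, 1], !![0, 1; 1, 0], !![0, -gi; gi, 0], !![1, 0; 0, -1]]

/-- The sixteen Pauli matrices in dimension four. -/
def pauli (m : Fin 16) : Matrix (Fin 4) (Fin 4) GaussianInt :=
  Matrix.of fun i j =>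
    pauliTwo ⟨m.1 / 4, by omega⟩ ⟨i.1 / 2, by omega⟩ ⟨j.1 / 2, by omega⟩ *
      pauliTwo ⟨m.1 % 4, by omega⟩ ⟨i.1 % 2, by omega⟩ ⟨j.1 % 2, by omega⟩

open Equiv in
/-- The identity and the fifteen double transpositions of five letters. -/
def dbl : Fin 16 → Equiv.Perm (Fin 5) :=
  ![1, swap 1 4 * swap 2 3, swap 0 3 * swap 2 4, swap 0 4 * swap 1 3,
    swap 1 3 * swap 2 4, swap 1 2 * swap 3 4, swap 0 1 * swap 2 4, swap 0 2 * swap 1 3,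
    swap 0 3 * swap 1 4, swap 0 2 * swap 1 4, swap 0 3 * swap 1 2, swap 0 1 * swap 3 4,
    swap 0 4 * swap 2 3, swap 0 1 * swap 2 3, swap 0 2 * swap 3 4, swap 0 4 * swap 1 2]

/-- Integral multiples of the generators of `G₂₉`. -/
def sZ : Fin 4 → Matrix (Fin 4) (Fin 4) GaussianInt :=
  ![!![1,0,0,0; 0,1,0,0; 0,0,1,0; 0,0,0,-1],
    !![1, 1, gi, gi; 1, 1, -gi, -gi; -gi, gi, 1, -1; -gi, gi, -1, 1],
    !![0,1,0,0; 1,0,0,0; 0,0,1,0; 0,0,0,1],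
    !![1,0,0,0; 0,0,1,0; 0,1,0,0; 0,0,0,1]]

open Equiv in
/-- The permutations of five letters attached to the generators of `G₂₉`. -/
def sP : Fin 4 → Equiv.Perm (Fin 5) := ![swap 0 4, swap 0 1, swap 2 3, swap 1 2]

/-- The scale factors. -/
noncomputable def sc : Fin 4 → ℂ := ![1, 1/2, 1, 1]

/-- The generators of `G₂₉`, as a family. -/
noncomputable def sC : Fin 4 → Matrix (Fin 4) (Fin 4) ℂ := ![s1, s2, s3, s4]

theorem sC_eq (k : Fin 4) : sC k = sc k • toC (sZ k) := by
  fin_cases k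
  all_goals
    ext i j
    fin_cases i <;> fin_cases j <;>
      simp [sC, sc, sZ, toC_apply, s1, s2, s3, s4, toComplex_gi]

theorem dbl_conj_exists : ∀ (σ : Equiv.Perm (Fin 5)) (k : Fin 16), ∃ l, σ * dbl k = dbl l * σ := by
  decide +kernel

theorem dbl_injective : ∀ k l, dbl k = dbl l → k = l := by decide +kernel

theorem dbl_central : ∀ σ : Equiv.Perm (Fin 5), (∀ k, σ * dbl k = dbl k * σ) → σ = 1 := by
  decide +kernel

theorem dbl_trans : ∀ m : Fin 16, m ≠ 0 → ∃ σ : Equiv.Perm (Fin 5), σ * dbl 13 = dbl m * σ := by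
  decide +kernel

theorem sZ_rel : ∀ (s : Fin 4) (k l : Fin 16), sP s * dbl k = dbl l * sP s →
    (sZ s * pauli k = pauli l * sZ s ∨ sZ s * pauli k = -(pauli l * sZ s)) := by
  decide +kernel

theorem pauli_sq : ∀ m, pauli m * pauli m = 1 := by decide +kernel

theorem pauli_trace : ∀ m n, m ≠ n → (pauli m * pauli n).trace = 0 := by decide +kernel

theorem pauli_signs : ∀ e : Fin 4 → Bool, ∃ m : Fin 16, ∀ j : Fin 4,
    pauli m * pauli (![1, 3, 4, 12] j) =
      (if e j then 1 else -1 : ℤ) • (pauli (![1, 3, 4, 12] j) * pauli m) := by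
  decide +kernel

theorem sZ_sq : ∀ s : Fin 4, sZ s * sZ s = if s = 1 then 4 else 1 := by decide +kernel

theorem sZ_word : (sZ 2 * sZ 1) * (sZ 2 * sZ 1) = 4 * pauli 13 := by decide +kernel

theorem sZ_word_order : (sZ 3 * sZ 2 * sZ 1) ^ 4 = 16 * pauli 10 := by decide +kernel

theorem sP_word : (sP 2 * sP 1) * (sP 2 * sP 1) = 1 := by decide +kernel

theorem sC_sq (k : Fin 4) : sC k * sC k = 1 := by
  rw [sC_eq, smul_mul_smul_comm, ← map_mul, sZ_sq]
  fin_cases k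
  · simp [sc]
  · simp only [sc]
    have : (toC (4 : Matrix (Fin 4) (Fin 4) GaussianInt)) = (4 : ℂ) • 1 := by
      rw [map_ofNat]
      ext i j
      simp [Matrix.ofNat_apply, Matrix.one_apply]
    simp [this, smul_smul]
    norm_num
  · simp [sc]
  · simp [sc]

/-- The generators of `G₂₉` in `GL(4,ℂ)`. -/
noncomputable def gS (k : Fin 4) : GL (Fin 4) ℂ := ⟨sC k, sC k, sC_sq k, sC_sq k⟩

theorem toC_pauli_sq (m : Fin 16) : toC (pauli m) * toC (pauli m) = 1 := by
  rw [← map_mul, pauli_sq, map_one]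

/-- The Pauli matrices in `GL(4,ℂ)`. -/
noncomputable def gP (m : Fin 16) : GL (Fin 4) ℂ :=
  ⟨toC (pauli m), toC (pauli m), toC_pauli_sq m, toC_pauli_sq m⟩

theorem pauli_ne_smul (m n : Fin 16) (c : ℂ) (h : toC (pauli m) = c • toC (pauli n)) : m = n := by
  by_contra hne
  have h1 : toC (pauli m) * toC (pauli n) = c • 1 := by
    rw [h, smul_mul_assoc, toC_pauli_sq]
  have h2 : (toC (pauli m) * toC (pauli n)).trace = 0 := by
    rw [← map_mul]
    have : (toC (pauli m * pauli n)).trace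
        = GaussianInt.toComplex ((pauli m * pauli n).trace) := by
      simp only [Matrix.trace, Matrix.diag_apply, toC_apply, map_sum]
    rw [this, pauli_trace m n hne, map_zero]
  rw [h1] at h2
  have h3 : c = 0 := by simpa using h2
  have h4 := toC_pauli_sq m
  rw [h, h3] at h4
  simp at h4

/-- Compatible pairs: `A` permutes the Pauli matrices up to sign as `σ` permutes the
double transpositions. -/
def relS : Subgroup (GL (Fin 4) ℂ × Equiv.Perm (Fin 5)) where
  carrier := {x | ∀ k l, x.2 * dbl k = dbl l * x.2 →
    ∃ e : ℤˣ, (x.1 : Matrix (Fin 4) (Fin 4) ℂ) * toC (pauli k) =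
      (e : ℤ) • (toC (pauli l) * (x.1 : Matrix (Fin 4) (Fin 4) ℂ))}
  one_mem' := by
    intro k l h
    have : k = l := dbl_injective k l (by simpa using h)
    exact ⟨1, by simp [this]⟩
  mul_mem' := by
    rintro ⟨A, σ⟩ ⟨B, τ⟩ hA hB k l h
    obtain ⟨m, hm⟩ := dbl_conj_exists τ k
    obtain ⟨e, he⟩ := hB k m hm
    have h' : σ * dbl m = dbl l * σ := by
      have h0 : σ * τ * dbl k = dbl l * (σ * τ) := h
      rw [mul_assoc, hm, ← mul_assoc, ← mul_assoc] at h0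
      exact mul_right_cancel h0
    obtain ⟨f, hf⟩ := hA m l h'
    refine ⟨e * f, ?_⟩
    simp only at he hf
    simp only [Prod.mk_mul_mk, Units.val_mul]
    rw [mul_assoc, he, mul_smul_comm, ← mul_assoc, hf, smul_mul_assoc, smul_smul, mul_assoc]
  inv_mem' := by
    rintro ⟨A, σ⟩ hA k l h
    have h' : σ * dbl l = dbl k * σ := by
      have h0 : σ⁻¹ * dbl k = dbl l * σ⁻¹ := h
      have := congrArg (fun x => σ * x * σ) h0
      simpa [mul_assoc] using this.symm
    obtain ⟨e, he⟩ := hA l k h'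
    refine ⟨e, ?_⟩
    simp only at he
    have h2 := congrArg (fun x => (A⁻¹ : GL (Fin 4) ℂ).1 * x * (A⁻¹ : GL (Fin 4) ℂ).1) he
    have i1 : (A⁻¹ : GL (Fin 4) ℂ).1 * A.1 = 1 := A.inv_mul
    have i2 : A.1 * (A⁻¹ : GL (Fin 4) ℂ).1 = 1 := A.mul_inv
    simp only [mul_smul_comm, smul_mul_assoc] at h2
    rw [← mul_assoc, i1, one_mul, mul_assoc, mul_assoc, i2, mul_one] at h2
    simp only [Prod.inv_mk]
    rw [h2, smul_smul]
    rcases Int.units_eq_one_or e with rfl | rfl <;> simp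

theorem gS_mem_relS (s : Fin 4) : (gS s, sP s) ∈ relS := by
  intro k l h
  have key : ∀ e : ℤ, sZ s * pauli k = e • (pauli l * sZ s) →
      (gS s).1 * toC (pauli k) = e • (toC (pauli l) * (gS s).1) := by
    intro e he
    change sC s * _ = e • (_ * sC s)
    rw [sC_eq, smul_mul_assoc, ← map_mul, he, map_zsmul, map_mul, mul_smul_comm, smul_comm]
  rcases sZ_rel s k l h with h1 | h1
  · exact ⟨1, key _ (by simpa using h1)⟩
  · exact ⟨-1, key _ (by simpa using h1)⟩

/-- The group generated by the pairs. -/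
noncomputable def Gam29 : Subgroup (GL (Fin 4) ℂ × Equiv.Perm (Fin 5)) :=
  Subgroup.closure (Set.range fun s => (gS s, sP s))

theorem Gam29_le : Gam29 ≤ relS := by
  rw [Gam29, Subgroup.closure_le]
  rintro _ ⟨s, rfl⟩
  exact gS_mem_relS s

theorem gS_mem (s : Fin 4) : (gS s, sP s) ∈ Gam29 := Subgroup.subset_closure ⟨s, rfl⟩

theorem Gam29_fst : Gam29.map (MonoidHom.fst _ _) = G29 := by
  rw [Gam29, MonoidHom.map_closure, G29]
  congr 1
  ext g
  simp only [Set.mem_image, Set.mem_range, exists_exists_eq_and, MonoidHom.coe_fst,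
    Set.mem_insert_iff, Set.mem_singleton_iff, Set.mem_ofPred_eq]
  constructor
  · rintro ⟨s, rfl⟩
    change sC s = _ ∨ sC s = _ ∨ sC s = _ ∨ sC s = _
    fin_cases s <;> simp [sC]
  · rintro (h | h | h | h)
    · exact ⟨0, Units.ext h.symm⟩
    · exact ⟨1, Units.ext h.symm⟩
    · exact ⟨2, Units.ext h.symm⟩
    · exact ⟨3, Units.ext h.symm⟩

open Equiv in
theorem Gam29_snd : Gam29.map (MonoidHom.snd _ _) = ⊤ := by
  have h : ∀ s, sP s ∈ Gam29.map (MonoidHom.snd _ _) := fun s => ⟨_, gS_mem s, rfl⟩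
  have hc : (sP 0 * sP 1 * sP 3 * sP 2) ∈ Gam29.map (MonoidHom.snd _ _) :=
    mul_mem (mul_mem (mul_mem (h 0) (h 1)) (h 3)) (h 2)
  have hcyc : (sP 0 * sP 1 * sP 3 * sP 2) = List.formPerm [4, 0, 1, 2, 3] := by decide +kernel
  have hs : (sP 0 * sP 1 * sP 3 * sP 2).support = Finset.univ := by decide +kernel
  have hcy : (sP 0 * sP 1 * sP 3 * sP 2).IsCycle := by
    rw [hcyc]
    exact List.isCycle_formPerm (by decide) (by decide)
  rw [eq_top_iff, ← Equiv.Perm.closure_prime_cycle_swap (by decide) hcy hs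
    (τ := sP 0) ⟨0, 4, by decide, rfl⟩, Subgroup.closure_le]
  rintro x (rfl | rfl)
  · exact hc
  · exact h 0

theorem Gam29_scalar (g : GL (Fin 4) ℂ) (q : Equiv.Perm (Fin 5)) (h : (g, q) ∈ Gam29)
    (hg : g ∈ Subgroup.center (GL (Fin 4) ℂ)) : q = 1 := by
  obtain ⟨c, hc⟩ := (mem_center_iff_smul g).1 hg
  have hc0 : c ≠ 0 := by
    rintro rfl
    have := g.mul_inv
    rw [hc] at this
    simp at this
  refine dbl_central q fun k => ?_
  obtain ⟨l, hl⟩ := dbl_conj_exists q k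
  obtain ⟨e, he⟩ := Gam29_le h k l hl
  simp only [hc] at he
  rw [smul_mul_assoc, one_mul, mul_smul_comm, mul_one, smul_comm] at he
  have he2 := smul_right_injective _ hc0 he
  have : k = l := pauli_ne_smul k l ((e : ℤ) : ℂ) (by rw [he2, Int.cast_smul_eq_zsmul])
  rw [hl, this]

theorem scalar_of_commute (A : Matrix (Fin 4) (Fin 4) ℂ)
    (h : ∀ j : Fin 4, A * toC (pauli (![1, 3, 4, 12] j)) = toC (pauli (![1, 3, 4, 12] j)) * A) :
    A = A 0 0 • 1 := by
  have p0 : toC (pauli 1) = !![0,1,0,0; 1,0,0,0; 0,0,0,1; 0,0,1,0] := by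
    ext i j
    fin_cases i <;> fin_cases j <;> simp [toC_apply, pauli, pauliTwo]
  have p1 : toC (pauli 3) = !![1,0,0,0; 0,-1,0,0; 0,0,1,0; 0,0,0,-1] := by
    ext i j
    fin_cases i <;> fin_cases j <;> simp [toC_apply, pauli, pauliTwo]
  have p2 : toC (pauli 4) = !![0,0,1,0; 0,0,0,1; 1,0,0,0; 0,1,0,0] := by
    ext i j
    fin_cases i <;> fin_cases j <;> simp [toC_apply, pauli, pauliTwo]
  have p3 : toC (pauli 12) = !![1,0,0,0; 0,1,0,0; 0,0,-1,0; 0,0,0,-1] := by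
    ext i j
    fin_cases i <;> fin_cases j <;> simp [toC_apply, pauli, pauliTwo]
  have h0 : A * toC (pauli 1) = toC (pauli 1) * A := h 0
  have h1 : A * toC (pauli 3) = toC (pauli 3) * A := h 1
  have h2 : A * toC (pauli 4) = toC (pauli 4) * A := h 2
  have h3 : A * toC (pauli 12) = toC (pauli 12) * A := h 3
  rw [p0] at h0
  rw [p1] at h1
  rw [p2] at h2
  rw [p3] at h3
  have d01 := congrFun (congrFun h0 0) 1
  have d23 := congrFun (congrFun h0 2) 3
  have d02 := congrFun (congrFun h2 0) 2
  have z1 := fun a b => congrFun (congrFun h1 a) b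
  have z3 := fun a b => congrFun (congrFun h3 a) b
  simp [Matrix.mul_apply, Fin.sum_univ_four] at d01 d23 d02
  ext a b
  have z1 := z1 a b
  have z3 := z3 a b
  fin_cases a <;> fin_cases b <;>
    simp [Matrix.mul_apply, Fin.sum_univ_four, neg_eq_self, self_eq_neg] at z1 z3 ⊢ <;>
    simp_all

theorem gP_mem (m : Fin 16) : ∃ g, (g, (1 : Equiv.Perm (Fin 5))) ∈ Gam29 ∧
    QuotientGroup.mk' (Subgroup.center (GL (Fin 4) ℂ)) g = QuotientGroup.mk' _ (gP m) := by
  by_cases hm : m = 0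
  · refine ⟨1, one_mem _, ?_⟩
    rw [mk_eq_mk_iff_smul]
    refine ⟨1, ?_⟩
    have : pauli m = 1 := by rw [hm]; decide +kernel
    change 1 = (1 : ℂ) • toC (pauli m)
    rw [this, map_one, one_smul]
  · have h0 : ((gS 2, sP 2) * (gS 1, sP 1)) * ((gS 2, sP 2) * (gS 1, sP 1)) ∈ Gam29 :=
      mul_mem (mul_mem (gS_mem 2) (gS_mem 1)) (mul_mem (gS_mem 2) (gS_mem 1))
    simp only [Prod.mk_mul_mk, sP_word] at h0
    have hval : (gS 2 * gS 1 * (gS 2 * gS 1)).1 = toC (pauli 13) := by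
      change sC 2 * sC 1 * (sC 2 * sC 1) = _
      simp only [sC_eq, smul_mul_smul_comm, ← map_mul, sZ_word]
      rw [map_mul, map_ofNat]
      have e2 : sc 2 = 1 := rfl
      have e1 : sc 1 = 1 / 2 := rfl
      rw [e1, e2]
      have h4 : (4 : Matrix (Fin 4) (Fin 4) ℂ) = (4 : ℂ) • 1 := by
        ext i j
        simp [Matrix.ofNat_apply, Matrix.one_apply]
      rw [h4, smul_mul_assoc, one_mul, smul_smul]
      norm_num
    obtain ⟨σ, hσ⟩ := dbl_trans m hm
    have hσ' : σ ∈ Gam29.map (MonoidHom.snd _ _) := by rw [Gam29_snd]; trivial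
    obtain ⟨⟨A, τ⟩, hA, rfl⟩ := hσ'
    obtain ⟨e, he⟩ := Gam29_le hA 13 m hσ
    refine ⟨A * (gS 2 * gS 1 * (gS 2 * gS 1)) * A⁻¹, ?_, ?_⟩
    · have := mul_mem (mul_mem hA h0) (inv_mem hA)
      simpa using this
    · rw [mk_eq_mk_iff_smul]
      refine ⟨((e : ℤ) : ℂ), ?_⟩
      rw [Units.val_mul, Units.val_mul, hval]
      simp only at he
      rw [he, Int.cast_smul_eq_zsmul, smul_mul_assoc, mul_assoc, ← Units.val_mul]
      simp [gP]

theorem Gam29_ker (g : GL (Fin 4) ℂ) (hg : (g, (1 : Equiv.Perm (Fin 5))) ∈ Gam29) : ∃ m,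
    QuotientGroup.mk' (Subgroup.center (GL (Fin 4) ℂ)) g = QuotientGroup.mk' _ (gP m) := by
  have h : ∀ k, ∃ b : Bool, g.1 * toC (pauli k) =
      (if b then 1 else -1 : ℤ) • (toC (pauli k) * g.1) := by
    intro k
    obtain ⟨e, he⟩ := Gam29_le hg k k (by simp)
    rcases Int.units_eq_one_or e with rfl | rfl
    · exact ⟨true, by simpa using he⟩
    · exact ⟨false, by simpa using he⟩
  choose b hb using h
  obtain ⟨m, hm⟩ := pauli_signs fun j => b (![1, 3, 4, 12] j)
  have hcomm := scalar_of_commute (toC (pauli m) * g.1) (by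
    intro j
    have h1 := congrArg toC (hm j)
    rw [map_mul, map_zsmul, map_mul] at h1
    rw [mul_assoc, hb, mul_smul_comm, ← mul_assoc, h1, smul_mul_assoc, smul_smul, mul_assoc]
    cases b (![1, 3, 4, 12] j) <;> simp)
  refine ⟨m, (mk_eq_mk_iff_smul _ _).2 ⟨(toC (pauli m) * g.1) 0 0, ?_⟩⟩
  generalize (toC (pauli m) * g.1) 0 0 = c at hcomm ⊢
  have h2 : toC (pauli m) * (toC (pauli m) * g.1) = toC (pauli m) * (c • 1) := by rw [hcomm]
  rw [← mul_assoc, toC_pauli_sq, one_mul, mul_smul_comm, mul_one] at h2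
  exact h2

theorem card_PG29 : Nat.card PG29 = 1920 := by
  have h := card_image_of_relation (Subgroup.center (GL (Fin 4) ℂ)) Gam29 Gam29_scalar
    (fun m => QuotientGroup.mk' _ (gP m))
    (fun m n hmn => by
      obtain ⟨c, hc⟩ := (mk_eq_mk_iff_smul _ _).1 hmn
      exact pauli_ne_smul m n c hc) gP_mem Gam29_ker
  rw [Gam29_fst, Gam29_snd] at h
  rw [PG29, h, Subgroup.card_top, Nat.card_perm]
  simp [Nat.factorial]

/-- `PG₂₉` contains an element of order eight. -/
theorem PG29_order : ∃ x : PG29, x ^ 4 ≠ 1 ∧ x ^ 6 ≠ 1 ∧ x ^ 10 ≠ 1 := by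
  have h0 : (gS 3, sP 3) * (gS 2, sP 2) * (gS 1, sP 1) ∈ Gam29 :=
    mul_mem (mul_mem (gS_mem 3) (gS_mem 2)) (gS_mem 1)
  simp only [Prod.mk_mul_mk] at h0
  set g := gS 3 * gS 2 * gS 1 with hgdef
  have hg : g ∈ G29 := by rw [← Gam29_fst]; exact ⟨_, h0, rfl⟩
  have hpow : ∀ n, (QuotientGroup.mk' (Subgroup.center (GL (Fin 4) ℂ)) g) ^ n = 1 →
      g ^ n ∈ Subgroup.center (GL (Fin 4) ℂ) := by
    intro n hn
    rw [← map_pow] at hn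
    exact (QuotientGroup.eq_one_iff _).1 hn
  have hperm : ∀ n, (QuotientGroup.mk' (Subgroup.center (GL (Fin 4) ℂ)) g) ^ n = 1 →
      (sP 3 * sP 2 * sP 1) ^ n = 1 := by
    intro n hn
    have := pow_mem h0 n
    exact Gam29_scalar (g ^ n) _ this (hpow n hn)
  refine ⟨⟨QuotientGroup.mk' _ g, ⟨g, hg, rfl⟩⟩, ?_, ?_, ?_⟩
  · intro h
    have h1 := hpow 4 (congrArg Subtype.val h)
    obtain ⟨c, hc⟩ := (mem_center_iff_smul _).1 h1
    have hv : (g ^ 4).1 = (sc 3 * sc 2 * sc 1) ^ 4 • toC (16 * pauli 10) := by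
      rw [Units.val_pow_eq_pow_val]
      change (sC 3 * sC 2 * sC 1) ^ 4 = _
      simp only [sC_eq, smul_mul_smul_comm, ← map_mul]
      rw [smul_pow, ← map_pow, sZ_word_order]
    rw [hv] at hc
    have := congrFun (congrFun hc 0) 3
    have h16 : (16 * pauli 10 : Matrix (Fin 4) (Fin 4) GaussianInt) 0 3 = -16 := by decide +kernel
    rw [Matrix.smul_apply, toC_apply, h16] at this
    simp [sc] at this
  · intro h
    exact absurd (hperm 6 (congrArg Subtype.val h)) (by decide +kernel)
  · intro h
    exact absurd (hperm 10 (congrArg Subtype.val h)) (by decide +kernel)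

/-! ### The Brandhorst–Hashimoto group -/

/-- The generators of `G_BH` over the Gaussian integers. -/
def bZ : Fin 3 → Matrix (Fin 6) (Fin 6) GaussianInt :=
  ![!![-1,0,0,0,0,0; 0,1,0,0,0,0; 0,0,1,0,0,0; 0,0,0,1,0,0; 0,0,0,0,1,0; 0,0,0,0,0,1],
    !![gi,0,0,0,0,0; 0,0,1,0,0,0; 0,1,0,0,0,0; 0,0,0,-gi,0,0; 0,0,0,0,0,1; 0,0,0,0,1,0],
    !![0,0,0,0,0,1; 1,0,0,0,0,0; 0,1,0,0,0,0; 0,0,1,0,0,0; 0,0,0,0,1,0; 0,0,0,1,0,0]]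

/-- The inverses of the generators of `G_BH`. -/
def bZi (s : Fin 3) : Matrix (Fin 6) (Fin 6) GaussianInt := (bZ s)ᴴ

theorem bZ_mul : ∀ s, bZ s * bZi s = 1 ∧ bZi s * bZ s = 1 := by decide +kernel

/-- The generators of `G_BH`, as a family. -/
noncomputable def bC : Fin 3 → Matrix (Fin 6) (Fin 6) ℂ := ![tBH, uBH, vBH]

theorem bC_eq (k : Fin 3) : bC k = toC (bZ k) := by
  fin_cases k
  all_goals
    ext i j
    fin_cases i <;> fin_cases j <;>
      simp [bC, bZ, toC_apply, tBH, uBH, vBH, toComplex_gi]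

/-- The generators of `G_BH` in `GL(6,ℂ)`. -/
noncomputable def gB (s : Fin 3) : GL (Fin 6) ℂ :=
  ⟨toC (bZ s), toC (bZi s), by rw [← map_mul, (bZ_mul s).1, map_one],
    by rw [← map_mul, (bZ_mul s).2, map_one]⟩

/-- The vectors `i^a e_j`, `a = 0, 1`. -/
def wZ (x : Fin 12) : Fin 6 → GaussianInt :=
  fun j => if j.1 = x.1 % 6 then (if x.1 < 6 then 1 else gi) else 0

/-- The vectors `i^a e_j` over the complex numbers. -/
noncomputable def wC (x : Fin 12) : Fin 6 → ℂ := fun j => GaussianInt.toComplex (wZ x j)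

/-- The permutations of the lines `± i^a e_j` induced by the generators. -/
def bP : Fin 3 → Equiv.Perm (Fin 12) :=
  ![1,
    ⟨![6, 2, 1, 9, 5, 4, 0, 8, 7, 3, 11, 10], ![6, 2, 1, 9, 5, 4, 0, 8, 7, 3, 11, 10],
      by decide +kernel, by decide +kernel⟩,
    ⟨![1, 2, 3, 5, 4, 0, 7, 8, 9, 11, 10, 6], ![5, 0, 1, 2, 4, 3, 11, 6, 7, 8, 10, 9],
      by decide +kernel, by decide +kernel⟩]

theorem bZ_rel : ∀ s x, bZ s *ᵥ wZ x = wZ (bP s x) ∨ bZ s *ᵥ wZ x = -wZ (bP s x) := by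
  decide +kernel

/-- Words representing the right cosets of a subgroup of order five in the icosahedral group. -/
def bWords : List (List (Fin 3)) :=
  [[], [1], [1, 2], [1, 2, 1], [1, 2, 2], [1, 2, 1, 2], [1, 2, 2, 1], [1, 2, 1, 2, 1],
    [1, 2, 2, 1, 2], [1, 2, 1, 2, 1, 2], [1, 2, 1, 2, 1, 2, 2], [1, 2, 1, 2, 1, 2, 2, 1]]

/-- All sixty elements of the permutation group. -/
def bList : List (Equiv.Perm (Fin 12)) :=
  (List.range 5).flatMap fun a => bWords.map fun l => bP 2 ^ a * (l.map bP).prod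

/-- The number with base-sixteen digits `f`. -/
def hor (f : Fin 12 → ℕ) : ℕ :=
  f 0 + 16 * (f 1 + 16 * (f 2 + 16 * (f 3 + 16 * (f 4 + 16 * (f 5 + 16 * (f 6 + 16 * (f 7 +
    16 * (f 8 + 16 * (f 9 + 16 * (f 10 + 16 * f 11))))))))))

/-- Base-sixteen digits. -/
def dig (c i : ℕ) : ℕ := c / 16 ^ i % 16

theorem dig_hor (f : Fin 12 → ℕ) (hf : ∀ i, f i < 16) (i : Fin 12) : dig (hor f) i.1 = f i := by
  have h0 := hf 0
  have h1 := hf 1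
  have h2 := hf 2
  have h3 := hf 3
  have h4 := hf 4
  have h5 := hf 5
  have h6 := hf 6
  have h7 := hf 7
  have h8 := hf 8
  have h9 := hf 9
  have h10 := hf 10
  have h11 := hf 11
  unfold dig hor
  fin_cases i <;> simp <;> omega

/-- The code of a permutation of twelve letters. -/
def enc (π : Equiv.Perm (Fin 12)) : ℕ := hor fun i => (π i).1

/-- Composition of codes. -/
def compN (c d : ℕ) : ℕ := hor fun i => dig c (dig d i.1)

theorem dig_enc (π : Equiv.Perm (Fin 12)) (i : Fin 12) : dig (enc π) i.1 = (π i).1 :=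
  dig_hor _ (fun j => lt_trans (π j).2 (by norm_num)) i

theorem enc_mul (π ρ : Equiv.Perm (Fin 12)) : enc (π * ρ) = compN (enc π) (enc ρ) := by
  unfold compN
  simp only [dig_enc]
  rfl

theorem enc_injective : Function.Injective enc := by
  intro π ρ h
  ext i
  rw [← dig_enc, h, dig_enc]

/-- The codes of the sixty elements. -/
def bCodes : List ℕ :=
  [
    205163983024656, 188254863593766, 12796727478546, 193819833704856, 152875991131281,
    35959404386841, 202738047781191, 2573917008291, 27170943684756, 160552122346266,
    73187713365681, 39810077727591, 117345066701601, 182899324269111, 24900231252771,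
    106963258548921, 165039892886706, 54307807758891, 115953950202696, 20926346912421,
    45523876905396, 196883521304106, 74427633588066, 57518514157176, 134602531538226,
    183660087173976, 43570757191221, 125657943679851, 201391172846691, 90660597668406,
    135792422102601, 40790487954336, 65386759656036, 111194892109626, 76287639750771,
    92363871119241, 152242516922451, 184835582883081, 62267203929936, 144358416950646,
    114598770545781, 3868447025751, 147960098731851, 52962442773921, 95146858259316,
    123363072055386, 70863397722501, 4476252092571, 169906409840901, 185982641209371,
    98554059376641, 164128437805191, 133428092843136, 23727051586056, 166793447561286,
    89293590073506, 8363012339076, 142195162593546, 72040403381136, 22141906618806]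

/-- The code of the identity. -/
def oneCode : ℕ := 205163983024656

/-- The codes of the generators. -/
def genCode : Fin 3 → ℕ := ![oneCode, 188254863593766, 117345066701601]

theorem enc_one : enc 1 = oneCode := by decide +kernel

theorem enc_gen : ∀ s, enc (bP s) = genCode s := by decide +kernel

theorem enc_word (l : List (Fin 3)) :
    enc (l.map bP).prod = l.foldr (fun s c => compN (genCode s) c) oneCode := by
  induction l with
  | nil => exact enc_one
  | cons s l ih => rw [List.map_cons, List.prod_cons, enc_mul, ih, enc_gen, List.foldr_cons]

theorem enc_pow (π : Equiv.Perm (Fin 12)) (a : ℕ) :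
    enc (π ^ a) = (compN (enc π))^[a] oneCode := by
  induction a with
  | zero => exact enc_one
  | succ a ih => rw [pow_succ', enc_mul, ih, Function.iterate_succ_apply']

theorem bCodes_eq : ((List.range 5).flatMap fun a => bWords.map fun l =>
    compN ((compN (genCode 2))^[a] oneCode)
      (l.foldr (fun s c => compN (genCode s) c) oneCode)) = bCodes := by
  decide +kernel

theorem bList_map_enc : bList.map enc = bCodes := by
  rw [← bCodes_eq, bList, List.map_flatMap]
  simp only [List.map_map, Function.comp_def, enc_mul, enc_word, enc_pow, enc_gen]

theorem enc_mem_iff (x : Equiv.Perm (Fin 12)) : enc x ∈ bCodes ↔ x ∈ bList := by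
  rw [← bList_map_enc, List.mem_map_of_injective enc_injective]

theorem bCodes_mul : ∀ s, ∀ c ∈ bCodes, compN (genCode s) c ∈ bCodes := by decide +kernel

theorem bCodes_nodup : bCodes.Nodup := by decide +kernel

theorem bCodes_pow : ∀ c ∈ bCodes, (compN c)^[2] oneCode = oneCode ∨
    (compN c)^[3] oneCode = oneCode ∨ (compN c)^[5] oneCode = oneCode := by decide +kernel

theorem bCodes_faithful : ∀ c ∈ bCodes, (∀ i : Fin 12, dig c i.1 % 6 = i.1 % 6) →
    c = oneCode := by
  decide +kernel

theorem bList_mul (s : Fin 3) (x : Equiv.Perm (Fin 12)) (hx : x ∈ bList) : bP s * x ∈ bList := by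
  rw [← enc_mem_iff] at hx ⊢
  rw [enc_mul, enc_gen]
  exact bCodes_mul s _ hx

theorem bList_nodup : bList.Nodup := by
  refine List.Nodup.of_map enc ?_
  rw [bList_map_enc]
  exact bCodes_nodup

theorem bList_one : 1 ∈ bList := by
  rw [← enc_mem_iff, enc_one]
  decide +kernel

theorem bList_length : bList.length = 60 := by
  rw [← List.length_map enc, bList_map_enc]
  rfl

theorem bList_pow (x : Equiv.Perm (Fin 12)) (hx : x ∈ bList) :
    x ^ 2 = 1 ∨ x ^ 3 = 1 ∨ x ^ 5 = 1 := by
  have h := bCodes_pow _ ((enc_mem_iff x).2 hx)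
  rw [← enc_pow, ← enc_pow, ← enc_pow, ← enc_one] at h
  exact h.imp (fun h => enc_injective h)
    (fun h => h.imp (fun h => enc_injective h) (fun h => enc_injective h))

theorem bList_faithful (x : Equiv.Perm (Fin 12)) (hx : x ∈ bList)
    (h : ∀ i : Fin 12, (x i).1 % 6 = i.1 % 6) : x = 1 := by
  apply enc_injective
  rw [enc_one]
  refine bCodes_faithful _ ((enc_mem_iff x).2 hx) fun i => ?_
  rw [dig_enc]
  exact h i

/-- The reflection in the `j`-th coordinate. -/
def reflZ (j : Fin 6) : Matrix (Fin 6) (Fin 6) GaussianInt :=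
  Matrix.diagonal fun i => if i = j then -1 else 1

theorem bZ_refl : ∀ j : Fin 6,
    bZ 1 * reflZ j = reflZ (![0, 2, 1, 3, 5, 4] j) * bZ 1 ∧
    bZ 2 * reflZ j = reflZ (![1, 2, 3, 5, 4, 0] j) * bZ 2 := by decide +kernel

theorem bZ_zero : bZ 0 = reflZ 0 := by decide +kernel

theorem wC_ne (x : Fin 12) : ∃ j : Fin 6, j.1 = x.1 % 6 ∧ wC x j ≠ 0 ∧
    ∀ i, i ≠ j → wC x i = 0 := by
  refine ⟨⟨x.1 % 6, Nat.mod_lt _ (by norm_num)⟩, rfl, ?_, ?_⟩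
  · unfold wC wZ
    rw [if_pos rfl]
    split_ifs <;> simp [toComplex_gi]
  · intro i hi
    have : ¬ i.1 = x.1 % 6 := fun h => hi (Fin.ext h)
    simp [wC, wZ, this]

/-- Compatible pairs for the group `G_BH`. -/
def relB : Subgroup (GL (Fin 6) ℂ × Equiv.Perm (Fin 12)) where
  carrier := {y | ∃ c : ℂ, c ≠ 0 ∧ ∀ x, ∃ e : ℤˣ,
    (y.1 : Matrix (Fin 6) (Fin 6) ℂ) *ᵥ wC x = (((e : ℤ) : ℂ) * c) • wC (y.2 x)}
  one_mem' := ⟨1, one_ne_zero, fun x => ⟨1, by simp⟩⟩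
  mul_mem' := by
    rintro ⟨A, σ⟩ ⟨B, τ⟩ ⟨c, hc, hA⟩ ⟨d, hd, hB⟩
    refine ⟨c * d, mul_ne_zero hc hd, fun x => ?_⟩
    obtain ⟨e, he⟩ := hB x
    obtain ⟨f, hf⟩ := hA (τ x)
    refine ⟨f * e, ?_⟩
    simp only at he hf
    simp only [Prod.mk_mul_mk, Units.val_mul, Equiv.Perm.mul_apply]
    rw [← Matrix.mulVec_mulVec, he, Matrix.mulVec_smul, hf, smul_smul]
    congr 1
    push_cast
    ring
  inv_mem' := by
    rintro ⟨A, σ⟩ ⟨c, hc, hA⟩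
    refine ⟨c⁻¹, inv_ne_zero hc, fun x => ?_⟩
    obtain ⟨e, he⟩ := hA (σ⁻¹ x)
    refine ⟨e, ?_⟩
    have hs : σ (σ⁻¹ x) = x := σ.apply_symm_apply x
    simp only [hs] at he
    have h2 := congrArg (fun v => (A⁻¹ : GL (Fin 6) ℂ).1 *ᵥ v) he
    have i1 : (A⁻¹ : GL (Fin 6) ℂ).1 * A.1 = 1 := A.inv_mul
    simp only [Matrix.mulVec_mulVec, i1, Matrix.one_mulVec, Matrix.mulVec_smul] at h2
    simp only [Prod.inv_mk]
    rw [h2, smul_smul]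
    have : ((e : ℤ) : ℂ) * c⁻¹ * (((e : ℤ) : ℂ) * c) = 1 := by
      rcases Int.units_eq_one_or e with rfl | rfl <;> simp [hc]
    rw [this, one_smul]

theorem toC_mulVec (s : Fin 3) (x : Fin 12) :
    toC (bZ s) *ᵥ wC x = fun j => GaussianInt.toComplex ((bZ s *ᵥ wZ x) j) := by
  ext j
  rw [RingHom.map_mulVec]
  rfl

theorem gB_mem_relB (s : Fin 3) : (gB s, bP s) ∈ relB := by
  refine ⟨1, one_ne_zero, fun x => ?_⟩
  change ∃ e : ℤˣ, toC (bZ s) *ᵥ wC x = (((e : ℤ) : ℂ) * 1) • wC (bP s x)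
  rw [toC_mulVec]
  rcases bZ_rel s x with h | h
  · refine ⟨1, ?_⟩
    rw [h]
    ext j
    simp [wC]
  · refine ⟨-1, ?_⟩
    rw [h]
    ext j
    simp [wC]

/-- The group generated by the pairs. -/
noncomputable def GamB : Subgroup (GL (Fin 6) ℂ × Equiv.Perm (Fin 12)) :=
  Subgroup.closure (Set.range fun s => (gB s, bP s))

theorem GamB_le : GamB ≤ relB := by
  rw [GamB, Subgroup.closure_le]
  rintro _ ⟨s, rfl⟩
  exact gB_mem_relB s

theorem gB_mem (s : Fin 3) : (gB s, bP s) ∈ GamB := Subgroup.subset_closure ⟨s, rfl⟩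

theorem GamB_fst : GamB.map (MonoidHom.fst _ _) = GBH := by
  rw [GamB, MonoidHom.map_closure, GBH]
  congr 1
  ext g
  simp only [Set.mem_image, Set.mem_range, exists_exists_eq_and, MonoidHom.coe_fst,
    Set.mem_insert_iff, Set.mem_singleton_iff, Set.mem_ofPred_eq]
  constructor
  · rintro ⟨s, rfl⟩
    change toC (bZ s) = _ ∨ toC (bZ s) = _ ∨ toC (bZ s) = _
    rw [← bC_eq]
    fin_cases s <;> simp [bC]
  · rintro (h | h | h)
    · exact ⟨0, Units.ext (((bC_eq 0).symm).trans h.symm)⟩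
    · exact ⟨1, Units.ext (((bC_eq 1).symm).trans h.symm)⟩
    · exact ⟨2, Units.ext (((bC_eq 2).symm).trans h.symm)⟩

theorem mem_GamB_snd (x : Equiv.Perm (Fin 12)) :
    x ∈ GamB.map (MonoidHom.snd _ _) ↔ x ∈ bList := by
  have h0 : GamB.map (MonoidHom.snd _ _) = Subgroup.closure (Set.range bP) := by
    rw [GamB, MonoidHom.map_closure]
    congr 1
    ext x
    simp
  rw [h0]
  refine closure_eq_list _ _ bList_one ?_ ?_ x
  · rintro _ ⟨s, rfl⟩ y hy
    exact bList_mul s y hy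
  · intro y hy
    simp only [bList, List.mem_flatMap, List.mem_map] at hy
    obtain ⟨a, -, l, -, rfl⟩ := hy
    have h2 : bP 2 ∈ Subgroup.closure (Set.range bP) :=
      Subgroup.subset_closure (Set.mem_range_self 2)
    refine mul_mem (pow_mem h2 a) (Subgroup.list_prod_mem _ ?_)
    intro z hz
    obtain ⟨s, -, rfl⟩ := List.mem_map.1 hz
    exact Subgroup.subset_closure ⟨s, rfl⟩

theorem card_GamB_snd :
    Nat.card (GamB.map (MonoidHom.snd (GL (Fin 6) ℂ) (Equiv.Perm (Fin 12)))) = 60 := by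
  have h : ((GamB.map (MonoidHom.snd (GL (Fin 6) ℂ) (Equiv.Perm (Fin 12))) :
      Subgroup (Equiv.Perm (Fin 12))) : Set (Equiv.Perm (Fin 12))) = bList.toFinset := by
    ext x
    simp only [List.coe_toFinset, Set.mem_ofPred_eq]
    exact mem_GamB_snd x
  calc Nat.card (GamB.map (MonoidHom.snd (GL (Fin 6) ℂ) (Equiv.Perm (Fin 12))))
      = Nat.card ((bList.toFinset : Set (Equiv.Perm (Fin 12)))) := by rw [← h]; rfl
    _ = bList.toFinset.card := by
      rw [Nat.card_coe_set_eq, Set.ncard_coe_finset]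
    _ = 60 := by rw [List.toFinset_card_of_nodup bList_nodup, bList_length]

theorem GamB_scalar (g : GL (Fin 6) ℂ) (q : Equiv.Perm (Fin 12)) (h : (g, q) ∈ GamB)
    (hg : g ∈ Subgroup.center (GL (Fin 6) ℂ)) : q = 1 := by
  obtain ⟨c, hc⟩ := (mem_center_iff_smul g).1 hg
  have hc0 : c ≠ 0 := by
    rintro rfl
    have := g.mul_inv
    rw [hc] at this
    simp at this
  have hq : q ∈ GamB.map (MonoidHom.snd _ _) :=
    Subgroup.mem_map_of_mem (MonoidHom.snd _ _) h
  refine bList_faithful q ((mem_GamB_snd q).1 hq) fun x => ?_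
  obtain ⟨d, hd, hx⟩ := GamB_le h
  obtain ⟨e, he⟩ := hx x
  simp only [hc] at he
  rw [Matrix.smul_mulVec, Matrix.one_mulVec] at he
  obtain ⟨j, hj, hj1, -⟩ := wC_ne x
  obtain ⟨k, hk, -, hk2⟩ := wC_ne (q x)
  have hjk : j = k := by
    by_contra hne
    have := congrFun he j
    simp only [Pi.smul_apply, smul_eq_mul, hk2 j hne, mul_zero] at this
    exact mul_ne_zero hc0 hj1 this
  rw [← hk, ← hj, hjk]

/-- Diagonal sign matrices. -/
noncomputable def sgnM : (Fin 6 → ℤˣ) →* GL (Fin 6) ℂ where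
  toFun e := ⟨Matrix.diagonal fun i => ((e i : ℤ) : ℂ), Matrix.diagonal fun i => ((e i : ℤ) : ℂ),
    by
      rw [Matrix.diagonal_mul_diagonal, ← Matrix.diagonal_one]
      congr 1
      ext i
      rcases Int.units_eq_one_or (e i) with h | h <;> simp [h],
    by
      rw [Matrix.diagonal_mul_diagonal, ← Matrix.diagonal_one]
      congr 1
      ext i
      rcases Int.units_eq_one_or (e i) with h | h <;> simp [h]⟩
  map_one' := by
    ext i j
    simp
  map_mul' e f := by
    apply Units.ext
    simp [Matrix.diagonal_mul_diagonal]

theorem sgnM_val (e : Fin 6 → ℤˣ) :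
    (sgnM e).1 = Matrix.diagonal fun i => ((e i : ℤ) : ℂ) := rfl

theorem sgnM_single (j : Fin 6) : (sgnM (Pi.mulSingle j (-1))).1 = toC (reflZ j) := by
  ext a b
  rw [sgnM_val, toC_apply, reflZ, Matrix.diagonal_apply, Matrix.diagonal_apply]
  by_cases h : a = b
  · subst h
    by_cases h2 : a = j
    · subst h2
      simp
    · simp [h2, Pi.mulSingle_eq_of_ne]
  · simp [h]

theorem refl_step (s : Fin 3) (j k : Fin 6) (h : bZ s * reflZ j = reflZ k * bZ s)
    (hj : (sgnM (Pi.mulSingle j (-1)), (1 : Equiv.Perm (Fin 12))) ∈ GamB) :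
    (sgnM (Pi.mulSingle k (-1)), (1 : Equiv.Perm (Fin 12))) ∈ GamB := by
  have h1 := mul_mem (mul_mem (gB_mem s) hj) (inv_mem (gB_mem s))
  have h2 : gB s * sgnM (Pi.mulSingle j (-1)) * (gB s)⁻¹ = sgnM (Pi.mulSingle k (-1)) := by
    rw [mul_inv_eq_iff_eq_mul]
    apply Units.ext
    rw [Units.val_mul, Units.val_mul, sgnM_single, sgnM_single]
    change toC (bZ s) * _ = _ * toC (bZ s)
    rw [← map_mul, h, map_mul]
  simpa [h2] using h1

theorem sgnM_mem (e : Fin 6 → ℤˣ) : (sgnM e, (1 : Equiv.Perm (Fin 12))) ∈ GamB := by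
  have r0 : (sgnM (Pi.mulSingle 0 (-1)), (1 : Equiv.Perm (Fin 12))) ∈ GamB := by
    have h : sgnM (Pi.mulSingle 0 (-1)) = gB 0 := by
      apply Units.ext
      rw [sgnM_single, ← bZ_zero]
      rfl
    rw [h]
    exact gB_mem 0
  have r1 := refl_step 2 0 1 (bZ_refl 0).2 r0
  have r2 := refl_step 2 1 2 (bZ_refl 1).2 r1
  have r3 := refl_step 2 2 3 (bZ_refl 2).2 r2
  have r5 := refl_step 2 3 5 (bZ_refl 3).2 r3
  have r4 := refl_step 1 5 4 (bZ_refl 5).1 r5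
  have hr : ∀ j, (sgnM (Pi.mulSingle j (-1)), (1 : Equiv.Perm (Fin 12))) ∈ GamB := by
    intro j
    fin_cases j
    · exact r0
    · exact r1
    · exact r2
    · exact r3
    · exact r4
    · exact r5
  let H : Subgroup (Fin 6 → ℤˣ) := GamB.comap ((MonoidHom.inl _ _).comp sgnM)
  have hH : ∀ j (a : ℤˣ), Pi.mulSingle j a ∈ H := by
    intro j a
    rcases Int.units_eq_one_or a with rfl | rfl
    · rw [Pi.mulSingle_one]
      exact one_mem _
    · exact hr j
  have : e ∈ H := by
    rw [← Finset.univ_prod_mulSingle e]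
    exact Subgroup.prod_mem _ fun j _ => hH j (e j)
  exact this

/-- Normalised sign matrices. -/
noncomputable def sgnN (b : Fin 5 → ℤˣ) : GL (Fin 6) ℂ := sgnM (Fin.snoc (α := fun _ => ℤˣ) b 1)

theorem sgnM_smul (e f : Fin 6 → ℤˣ) (c : ℂ) (h : (sgnM e).1 = c • (sgnM f).1) (i : Fin 6) :
    ((e i : ℤ) : ℂ) = c * ((f i : ℤ) : ℂ) := by
  have := congrFun (congrFun h i) i
  simpa [sgnM_val] using this

theorem sgnN_injective (b d : Fin 5 → ℤˣ) (c : ℂ) (h : (sgnN b).1 = c • (sgnN d).1) : b = d := by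
  have h0 := sgnM_smul _ _ c h
  have h5 := h0 (Fin.last 5)
  simp only [Fin.snoc_last] at h5
  have hc : c = 1 := by simpa using h5.symm
  ext i
  have hi := h0 i.castSucc
  simp only [Fin.snoc_castSucc, hc, one_mul] at hi
  exact_mod_cast hi

theorem wC_low (j : Fin 6) : wC ⟨j.1, by omega⟩ = Pi.single j 1 := by
  ext i
  have h6 : j.1 % 6 = j.1 := Nat.mod_eq_of_lt j.2
  by_cases h : i = j
  · subst h
    simp [wC, wZ, h6]
  · have h' : ¬ i.1 = j.1 := fun hh => h (Fin.ext hh)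
    simp [wC, wZ, h6, h, h']

theorem GamB_ker_val (g : GL (Fin 6) ℂ) (hg : (g, (1 : Equiv.Perm (Fin 12))) ∈ GamB) :
    ∃ (c : ℂ) (e : Fin 6 → ℤˣ), g.1 = c • (sgnM e).1 := by
  obtain ⟨c, hc, h⟩ := GamB_le hg
  choose e he using h
  refine ⟨c, fun j => e ⟨j.1, by omega⟩, ?_⟩
  ext i j
  have h1 := congrFun (he ⟨j.1, by omega⟩) i
  simp only [Equiv.Perm.one_apply, wC_low, Matrix.mulVec_single_one] at h1
  rw [Matrix.col_apply] at h1
  rw [h1, sgnM_val]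
  by_cases hij : i = j
  · subst hij
    simp [mul_comm]
  · simp [hij]

theorem GamB_ker (g : GL (Fin 6) ℂ) (hg : (g, (1 : Equiv.Perm (Fin 12))) ∈ GamB) : ∃ b,
    QuotientGroup.mk' (Subgroup.center (GL (Fin 6) ℂ)) g = QuotientGroup.mk' _ (sgnN b) := by
  obtain ⟨c, e, h⟩ := GamB_ker_val g hg
  refine ⟨fun i => e i.castSucc * e (Fin.last 5), (mk_eq_mk_iff_smul _ _).2
    ⟨c * ((e (Fin.last 5) : ℤ) : ℂ), ?_⟩⟩
  rw [h, sgnN, sgnM_val, sgnM_val, mul_smul]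
  congr 1
  ext i j
  by_cases hij : i = j
  · subst hij
    rw [Matrix.smul_apply, Matrix.diagonal_apply_eq, Matrix.diagonal_apply_eq, smul_eq_mul]
    induction i using Fin.lastCases with
    | last => rw [Fin.snoc_last]; simp
    | cast k =>
      rw [Fin.snoc_castSucc]
      rcases Int.units_eq_one_or (e (Fin.last 5)) with h5 | h5 <;> rw [h5] <;> simp
  · simp [hij]

theorem card_PGBH : Nat.card PGBH = 1920 := by
  have h := card_image_of_relation (Subgroup.center (GL (Fin 6) ℂ)) GamB GamB_scalar
    (fun b => QuotientGroup.mk' _ (sgnN b))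
    (fun m n hmn => by
      obtain ⟨c, hc⟩ := (mk_eq_mk_iff_smul _ _).1 hmn
      exact sgnN_injective m n c hc) (fun b => ⟨sgnN b, sgnM_mem _, rfl⟩) GamB_ker
  rw [GamB_fst, card_GamB_snd] at h
  rw [PGBH, h]
  simp

/-- Element orders in `PG_BH`. -/
theorem PGBH_order (x : PGBH) : x ^ 4 = 1 ∨ x ^ 6 = 1 ∨ x ^ 10 = 1 := by
  obtain ⟨x, hx⟩ := x
  obtain ⟨g, hg, rfl⟩ := hx
  rw [← GamB_fst] at hg
  obtain ⟨⟨g, q⟩, hgq, rfl⟩ := hg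
  have key : ∀ n, q ^ n = 1 →
      (QuotientGroup.mk' (Subgroup.center (GL (Fin 6) ℂ)) g) ^ (n * 2) = 1 := by
    intro n hn
    have h1 := pow_mem hgq n
    rw [Prod.pow_mk, hn] at h1
    obtain ⟨c, e, h⟩ := GamB_ker_val _ h1
    rw [← map_pow]
    refine (QuotientGroup.eq_one_iff _).2 ((mem_center_iff_smul _).2 ⟨c * c, ?_⟩)
    rw [pow_mul, sq, Units.val_mul, h, smul_mul_smul_comm, ← Units.val_mul, ← map_mul]
    have : e * e = 1 := by
      ext i
      rcases Int.units_eq_one_or (e i) with h | h <;> simp [h]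
    rw [this, map_one, Units.val_one]
  have hq : q ∈ GamB.map (MonoidHom.snd _ _) :=
    Subgroup.mem_map_of_mem (MonoidHom.snd _ _) hgq
  rcases bList_pow q ((mem_GamB_snd q).1 hq) with h | h | h
  · exact Or.inl (Subtype.ext (key 2 h))
  · exact Or.inr (Or.inl (Subtype.ext (key 3 h)))
  · exact Or.inr (Or.inr (Subtype.ext (key 5 h)))

/-- `PG₂₉` and `PG_BH` both have order `1920`, but they are not isomorphic. -/
theorem stmt_18 :
    Nat.card PG29 = 1920 ∧ Nat.card PGBH = 1920 ∧ IsEmpty (PG29 ≃* PGBH) := by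
  refine ⟨card_PG29, card_PGBH, ⟨fun f => ?_⟩⟩
  obtain ⟨x, h4, h6, h10⟩ := PG29_order
  have back : ∀ n, f x ^ n = 1 → x ^ n = 1 := by
    intro n hn
    apply f.injective
    rw [map_pow, hn, map_one]
  rcases PGBH_order (f x) with h | h | h
  · exact h4 (back _ h)
  · exact h6 (back _ h)
  · exact h10 (back _ h)
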